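/- Terms and abstractions are interpretable in any semantic domain: there exist functions sem : term → val → Dt and semAbs : abs → val → Da such that for all good terms and abstractions and good inputs of domain cardinality < |var|: sem (Var xs x) ρ = ρ xs x; sem (Op δ inp binp) ρ = op δ (↑(λX. sem X ρ) inp) (↑(λA. semAbs A ρ) binp); semAbs (Abs xs x X) ρ = abs xs (λd. sem X (ρ[(xs,x) ← d])). Moreover: sem (X[Y/y]_ys) ρ = sem X (ρ[(ys,y) ← sem Y ρ]) for all good terms X, Y; and if fresh xs x X, then for all valuations ρ, ρ' that agree everywhere except possibly at (xs,x), sem X ρ = sem X ρ'. -/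

import Mathlib

open scoped Classical

universe u

section Binding

variable (var varsort index bindex opsym : Type u)

/-! ### Inputs -/

/-- An `(α,β)`-input: a partial function from `α` to `β`. -/
abbrev Input (α β : Type u) : Type u := α → Option β

/-- The domain of an input. -/
def idom {α β : Type u} (inp : Input α β) : Set α := {a | inp a ≠ none}

/-- The componentwise lifting of a predicate to inputs. -/
def liftP {α β : Type u} (P : β → Prop) (inp : Input α β) : Prop :=
  ∀ a b, inp a = some b → P b

/-- The componentwise lifting of a function to inputs. -/
def liftF {α β γ : Type u} (f : β → γ) (inp : Input α β) : Input α γ :=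
  fun a => (inp a).map f

/-- An input is small if its domain has cardinality smaller than that of `var`. -/
def smallDom {α β : Type u} (inp : Input α β) : Prop :=
  Cardinal.mk (idom inp) < Cardinal.mk var

/-! ### Quasiterms -/

mutual
/-- Quasiterms: raw terms before quotienting by alpha-equivalence. -/
inductive QTerm : Type u where
  | qVar : varsort → var → QTerm
  | qOp : opsym → (index → Option QTerm) → (bindex → Option QAbs) → QTerm
/-- Quasiabstractions. -/
inductive QAbs : Type u where
  | qAbs : varsort → var → QTerm → QAbs
end

/-- Transposition of two variables. -/
noncomputable def swapVar (z1 z2 x : var) : var :=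
  if x = z1 then z2 else if x = z2 then z1 else x

/-- Sort-aware transposition of variables (acts only on variables of varsort `zs`). -/
noncomputable def swapVarS (zs xs : varsort) (z1 z2 x : var) : var :=
  if xs = zs then swapVar var z1 z2 x else x

variable {var varsort index bindex opsym}

/-- Swapping of the variables `z1`, `z2` at varsort `zs` in a quasiterm
(transposing them everywhere, including binding positions). -/
noncomputable def qSwap (z1 z2 : var) (zs : varsort) :
    QTerm var varsort index bindex opsym → QTerm var varsort index bindex opsym :=
  QTerm.rec (motive_1 := fun _ => QTerm var varsort index bindex opsym)
    (motive_2 := fun _ => QAbs var varsort index bindex opsym)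
    (motive_3 := fun _ => Option (QTerm var varsort index bindex opsym))
    (motive_4 := fun _ => Option (QAbs var varsort index bindex opsym))
    (fun xs x => .qVar xs (swapVarS var varsort zs xs z1 z2 x))
    (fun d _ _ rinp rbinp => .qOp d rinp rbinp)
    (fun xs x _ rX => .qAbs xs (swapVarS var varsort zs xs z1 z2 x) rX)
    none (fun _ r => some r) none (fun _ r => some r)

/-- Swapping of variables in a quasiabstraction. -/
noncomputable def qSwapAbs (z1 z2 : var) (zs : varsort) :
    QAbs var varsort index bindex opsym → QAbs var varsort index bindex opsym
  | .qAbs xs x X => .qAbs xs (swapVarS var varsort zs xs z1 z2 x) (qSwap z1 z2 zs X)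

/-! ### Freshness and goodness -/

mutual
/-- `QFresh ys y X`: the variable `y` of varsort `ys` has no free occurrence in `X`. -/
inductive QFresh : varsort → var → QTerm var varsort index bindex opsym → Prop where
  | qVar : ∀ {ys y xs x}, (ys, y) ≠ (xs, x) → QFresh ys y (.qVar xs x)
  | qOp : ∀ {ys y d inp binp}, (∀ i X, inp i = some X → QFresh ys y X) →
      (∀ j A, binp j = some A → QFreshAbs ys y A) → QFresh ys y (.qOp d inp binp)
/-- Freshness for quasiabstractions. -/
inductive QFreshAbs : varsort → var → QAbs var varsort index bindex opsym → Prop where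
  | qAbs_bound : ∀ {xs x X}, QFreshAbs xs x (.qAbs xs x X)
  | qAbs_body : ∀ {ys y xs x X}, QFresh ys y X → QFreshAbs ys y (.qAbs xs x X)
end

mutual
/-- Good quasiterms: all constructors branch less than `|var|`. -/
inductive QGood : QTerm var varsort index bindex opsym → Prop where
  | qVar : ∀ {xs x}, QGood (.qVar xs x)
  | qOp : ∀ {d inp binp}, (∀ i X, inp i = some X → QGood X) →
      (∀ j A, binp j = some A → QGoodAbs A) →
      smallDom var inp → smallDom var binp → QGood (.qOp d inp binp)
/-- Good quasiabstractions. -/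
inductive QGoodAbs : QAbs var varsort index bindex opsym → Prop where
  | qAbs : ∀ {xs x X}, QGood X → QGoodAbs (.qAbs xs x X)
end

/-! ### Alpha-equivalence -/

mutual
/-- Alpha-equivalence of quasiterms. -/
inductive Alpha : QTerm var varsort index bindex opsym →
    QTerm var varsort index bindex opsym → Prop where
  | qVar : ∀ {xs x}, Alpha (.qVar xs x) (.qVar xs x)
  | qOp : ∀ {d inp binp inp' binp'},
      (∀ i, inp i = none ↔ inp' i = none) →
      (∀ i X X', inp i = some X → inp' i = some X' → Alpha X X') →
      (∀ j, binp j = none ↔ binp' j = none) →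
      (∀ j A A', binp j = some A → binp' j = some A' → AlphaAbs A A') →
      Alpha (.qOp d inp binp) (.qOp d inp' binp')
/-- Alpha-equivalence of quasiabstractions (the exists-fresh formulation). -/
inductive AlphaAbs : QAbs var varsort index bindex opsym →
    QAbs var varsort index bindex opsym → Prop where
  | qAbs : ∀ {xs x x' X X' y}, y ∉ ({x, x'} : Set var) →
      QFresh xs y X → QFresh xs y X' →
      Alpha (qSwap y x xs X) (qSwap y x' xs X') →
      AlphaAbs (.qAbs xs x X) (.qAbs xs x' X')
end

/-! ### Terms and abstractions as quotients -/

variable (var varsort index bindex opsym)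

/-- Terms: quasiterms modulo alpha-equivalence. -/
def Term : Type u := Quot (@Alpha var varsort index bindex opsym)

/-- Abstractions: quasiabstractions modulo alpha-equivalence. -/
def Abstr : Type u := Quot (@AlphaAbs var varsort index bindex opsym)

variable {var varsort index bindex opsym}

/-- The projection from quasiterms to terms. -/
def tmk : QTerm var varsort index bindex opsym → Term var varsort index bindex opsym :=
  Quot.mk _

/-- The projection from quasiabstractions to abstractions. -/
def amk : QAbs var varsort index bindex opsym → Abstr var varsort index bindex opsym :=
  Quot.mk _

/-- A representative of a term. -/
noncomputable def trep (X : Term var varsort index bindex opsym) :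
    QTerm var varsort index bindex opsym := Quot.out X

/-- A representative of an abstraction. -/
noncomputable def arep (A : Abstr var varsort index bindex opsym) :
    QAbs var varsort index bindex opsym := Quot.out A

/-- Good terms. -/
def good (X : Term var varsort index bindex opsym) : Prop := QGood (trep X)

/-- Good abstractions. -/
def goodAbs (A : Abstr var varsort index bindex opsym) : Prop := QGoodAbs (arep A)

/-- The variable-injection constructor on terms. -/
def Var (xs : varsort) (x : var) : Term var varsort index bindex opsym :=
  tmk (.qVar xs x)

/-- The operation constructor on terms. -/
noncomputable def Op (d : opsym) (inp : Input index (Term var varsort index bindex opsym))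
    (binp : Input bindex (Abstr var varsort index bindex opsym)) :
    Term var varsort index bindex opsym :=
  tmk (.qOp d (liftF trep inp) (liftF arep binp))

/-- The abstraction constructor. -/
noncomputable def Abs (xs : varsort) (x : var) (X : Term var varsort index bindex opsym) :
    Abstr var varsort index bindex opsym :=
  amk (.qAbs xs x (trep X))

/-- Freshness on terms. -/
def fresh (ys : varsort) (y : var) (X : Term var varsort index bindex opsym) : Prop :=
  QFresh ys y (trep X)

/-- Freshness on abstractions. -/
def freshAbs (ys : varsort) (y : var) (A : Abstr var varsort index bindex opsym) : Prop :=
  QFreshAbs ys y (arep A)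

/-- Swapping on terms. -/
noncomputable def tswap (X : Term var varsort index bindex opsym)
    (z1 z2 : var) (zs : varsort) : Term var varsort index bindex opsym :=
  tmk (qSwap z1 z2 zs (trep X))

/-! ### Substitution -/

mutual
/-- The graph of capture-avoiding substitution on quasiterms:
`QSubst X Y y ys Z` means that `Z` is a result of substituting `Y` for the free
occurrences of the variable `y` of varsort `ys` in `X` (along a capture-free
representative). -/
inductive QSubst : QTerm var varsort index bindex opsym →
    QTerm var varsort index bindex opsym → var → varsort →
    QTerm var varsort index bindex opsym → Prop where
  | var_eq : ∀ {Y y ys}, QSubst (.qVar ys y) Y y ys Y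
  | var_ne : ∀ {Y y ys xs x}, (xs, x) ≠ (ys, y) → QSubst (.qVar xs x) Y y ys (.qVar xs x)
  | op : ∀ {Y y ys d inp binp inp' binp'},
      (∀ i, inp i = none ↔ inp' i = none) →
      (∀ i X X', inp i = some X → inp' i = some X' → QSubst X Y y ys X') →
      (∀ j, binp j = none ↔ binp' j = none) →
      (∀ j A A', binp j = some A → binp' j = some A' → QSubstAbs A Y y ys A') →
      QSubst (.qOp d inp binp) Y y ys (.qOp d inp' binp')
/-- The graph of capture-avoiding substitution on quasiabstractions. -/
inductive QSubstAbs : QAbs var varsort index bindex opsym →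
    QTerm var varsort index bindex opsym → var → varsort →
    QAbs var varsort index bindex opsym → Prop where
  | abs : ∀ {Y y ys xs x X X'}, (xs, x) ≠ (ys, y) → QFresh xs x Y →
      QSubst X Y y ys X' → QSubstAbs (.qAbs xs x X) Y y ys (.qAbs xs x X')
end

/-- The graph of capture-avoiding substitution on terms. -/
def SubstRel (X Y : Term var varsort index bindex opsym) (y : var) (ys : varsort)
    (Z : Term var varsort index bindex opsym) : Prop :=
  ∃ qX qZ, tmk qX = X ∧ tmk qZ = Z ∧ QSubst qX (trep Y) y ys qZ

/-- Capture-avoiding substitution on terms: `subst X Y y ys` is `X[Y/y]_ys`. -/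
noncomputable def subst (X Y : Term var varsort index bindex opsym)
    (y : var) (ys : varsort) : Term var varsort index bindex opsym :=
  if h : ∃ Z, SubstRel X Y y ys Z then h.choose else X

/-- The graph of capture-avoiding substitution on abstractions. -/
def SubstAbsRel (A : Abstr var varsort index bindex opsym)
    (Y : Term var varsort index bindex opsym) (y : var) (ys : varsort)
    (B : Abstr var varsort index bindex opsym) : Prop :=
  ∃ qA qB, amk qA = A ∧ amk qB = B ∧ QSubstAbs qA (trep Y) y ys qB

/-- Capture-avoiding substitution on abstractions: `substAbs A Y y ys` is `A[Y/y]_ys`. -/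
noncomputable def substAbs (A : Abstr var varsort index bindex opsym)
    (Y : Term var varsort index bindex opsym) (y : var) (ys : varsort) :
    Abstr var varsort index bindex opsym :=
  if h : ∃ B, SubstAbsRel A Y y ys B then h.choose else A

/-! ### Parallel substitution -/

mutual
/-- The graph of capture-avoiding parallel substitution on quasiterms, along an
assignment `ρ : varsort → var → Option qterm`. -/
inductive QPSubst : QTerm var varsort index bindex opsym →
    (varsort → var → Option (QTerm var varsort index bindex opsym)) →
    QTerm var varsort index bindex opsym → Prop where
  | var_some : ∀ {ρ xs x Y}, ρ xs x = some Y → QPSubst (.qVar xs x) ρ Y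
  | var_none : ∀ {ρ xs x}, ρ xs x = none → QPSubst (.qVar xs x) ρ (.qVar xs x)
  | op : ∀ {ρ d inp binp inp' binp'},
      (∀ i, inp i = none ↔ inp' i = none) →
      (∀ i X X', inp i = some X → inp' i = some X' → QPSubst X ρ X') →
      (∀ j, binp j = none ↔ binp' j = none) →
      (∀ j A A', binp j = some A → binp' j = some A' → QPSubstAbs A ρ A') →
      QPSubst (.qOp d inp binp) ρ (.qOp d inp' binp')
/-- The graph of capture-avoiding parallel substitution on quasiabstractions. -/
inductive QPSubstAbs : QAbs var varsort index bindex opsym →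
    (varsort → var → Option (QTerm var varsort index bindex opsym)) →
    QAbs var varsort index bindex opsym → Prop where
  | abs : ∀ {ρ xs x X X'}, ρ xs x = none →
      (∀ ys y Y, ρ ys y = some Y → QFresh xs x Y) →
      QPSubst X ρ X' → QPSubstAbs (.qAbs xs x X) ρ (.qAbs xs x X')
end

/-- Turning a term-valued assignment into a quasiterm-valued one, by picking
representatives. -/
noncomputable def qassign (ρ : varsort → var → Option (Term var varsort index bindex opsym)) :
    varsort → var → Option (QTerm var varsort index bindex opsym) :=
  fun xs x => (ρ xs x).map trep

/-- The graph of parallel substitution on terms. -/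
def PSubstRel (X : Term var varsort index bindex opsym)
    (ρ : varsort → var → Option (Term var varsort index bindex opsym))
    (Z : Term var varsort index bindex opsym) : Prop :=
  ∃ qX qZ, tmk qX = X ∧ tmk qZ = Z ∧ QPSubst qX (qassign ρ) qZ

/-- Capture-avoiding parallel substitution on terms: `psubst X ρ` is `X[ρ]`. -/
noncomputable def psubst (X : Term var varsort index bindex opsym)
    (ρ : varsort → var → Option (Term var varsort index bindex opsym)) :
    Term var varsort index bindex opsym :=
  if h : ∃ Z, PSubstRel X ρ Z then h.choose else X

/-- The graph of parallel substitution on abstractions. -/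
def PSubstAbsRel (A : Abstr var varsort index bindex opsym)
    (ρ : varsort → var → Option (Term var varsort index bindex opsym))
    (B : Abstr var varsort index bindex opsym) : Prop :=
  ∃ qA qB, amk qA = A ∧ amk qB = B ∧ QPSubstAbs qA (qassign ρ) qB

/-- Capture-avoiding parallel substitution on abstractions. -/
noncomputable def psubstAbs (A : Abstr var varsort index bindex opsym)
    (ρ : varsort → var → Option (Term var varsort index bindex opsym)) :
    Abstr var varsort index bindex opsym :=
  if h : ∃ B, PSubstAbsRel A ρ B then h.choose else A

/-- Update of a valuation at a (varsort, variable) point. -/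
noncomputable def updVal {Dt : Type u} (ρ : varsort → var → Dt)
    (xs : varsort) (x : var) (d : Dt) : varsort → var → Dt :=
  fun ys y => if (ys, y) = (xs, x) then d else ρ ys y

/-!
Quasiterms are interpreted by structural recursion. The interpretation is equivariant (permuting
the variables of a quasiterm amounts to permuting the valuation) and depends only on the free
variables; together these two facts make it invariant under alpha-equivalence, so that it descends
to terms. It sends the graph of capture-avoiding substitution to valuation update, and regularity
of `|var|` is what makes that graph total on good terms: the variables of a good quasiterm are
fewer than `|var|`, so there is always room to rename its binders apart from any small set.
-/

section Inputs

variable {α β γ δ ε : Type u}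

theorem liftF_eq_none_iff {f : β → γ} {inp : Input α β} {a : α} :
    liftF f inp a = none ↔ inp a = none :=
  Option.map_eq_none_iff

theorem liftP_liftF {P : γ → Prop} {f : β → γ} {inp : Input α β} :
    liftP P (liftF f inp) ↔ liftP (fun b => P (f b)) inp := by
  simp only [liftP, liftF, Option.map_eq_some_iff, forall_exists_index, and_imp]
  grind

theorem liftF_liftF (g : γ → δ) (f : β → γ) (inp : Input α β) :
    liftF g (liftF f inp) = liftF (fun b => g (f b)) inp :=
  funext fun _ => Option.map_map ..

/-- The componentwise lifting of a relation to inputs, which have to have the same domain. -/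
def liftR (R : β → γ → Prop) (inp : Input α β) (inp' : Input α γ) : Prop :=
  (∀ a, inp a = none ↔ inp' a = none) ∧ ∀ a b c, inp a = some b → inp' a = some c → R b c

theorem liftR_self {R : β → β → Prop} {inp : Input α β} :
    liftR R inp inp ↔ liftP (fun b => R b b) inp := by
  simp only [liftR, liftP]
  grind

theorem liftR_liftF {R : γ → δ → Prop} {f : β → γ} {g : ε → δ} {inp : Input α β}
    {inp' : Input α ε} :
    liftR R (liftF f inp) (liftF g inp') ↔ liftR (fun b c => R (f b) (g c)) inp inp' := by
  simp only [liftR, liftF_eq_none_iff]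
  simp only [liftF, Option.map_eq_some_iff, forall_exists_index, and_imp]
  grind

theorem liftR_liftF_right {R : β → γ → Prop} {f : β → γ} {inp : Input α β} :
    liftR R inp (liftF f inp) ↔ liftP (fun b => R b (f b)) inp := by
  simp only [liftR, liftF_eq_none_iff]
  simp only [liftF, Option.map_eq_some_iff, liftP]
  grind

theorem liftF_eq_liftF {f : β → δ} {g : γ → δ} {inp : Input α β} {inp' : Input α γ}
    (h : liftR (fun b c => f b = g c) inp inp') : liftF f inp = liftF g inp' := by
  funext a
  have hdom := h.1 a
  have hval := h.2 a
  unfold liftF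
  cases hb : inp a <;> cases hc : inp' a <;> simp_all

theorem liftF_congr {f g : β → γ} {inp : Input α β} (h : liftP (fun b => f b = g b) inp) :
    liftF f inp = liftF g inp :=
  liftF_eq_liftF (liftR_self.2 h)

theorem liftP.exists_liftP_apply {R : β → β → Prop} {inp : Input α β}
    (h : liftP (fun b => ∃ c, R b c) inp) : ∃ f : β → β, liftP (fun b => R b (f b)) inp := by
  refine ⟨fun b => if hb : ∃ c, R b c then hb.choose else b, fun a b hab => ?_⟩
  have hb : ∃ c, R b c := h a b hab
  simpa only [dif_pos hb] using hb.choose_spec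

theorem smallDom_liftF {f : β → γ} {inp : Input α β} :
    smallDom var (liftF f inp) ↔ smallDom var inp := by
  simp only [smallDom, idom, ne_eq, liftF_eq_none_iff]

/-- The union of a set-valued input over its domain. -/
def inputUnion (inp : Input α (Set γ)) : Set γ :=
  ⋃ a ∈ idom inp, (inp a).getD ∅

theorem mem_inputUnion {inp : Input α (Set γ)} {c : γ} :
    c ∈ inputUnion inp ↔ ∃ a S, inp a = some S ∧ c ∈ S := by
  simp only [inputUnion, idom, Set.mem_iUnion, exists_prop]
  refine exists_congr fun a => ?_
  cases h : inp a <;> simp [h]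

theorem forall_mem_inputUnion_liftF {P : γ → Prop} {f : β → Set γ} {inp : Input α β} :
    (∀ c ∈ inputUnion (liftF f inp), P c) ↔ liftP (fun b => ∀ c ∈ f b, P c) inp := by
  simp only [mem_inputUnion, liftF, Option.map_eq_some_iff, liftP]
  grind

theorem mk_inputUnion_lt (hreg : (Cardinal.mk var).IsRegular) {inp : Input α (Set γ)}
    (hdom : smallDom var inp) (h : liftP (fun S : Set γ => Cardinal.mk S < Cardinal.mk var) inp) :
    Cardinal.mk (inputUnion inp) < Cardinal.mk var := by
  refine (Cardinal.card_biUnion_lt_iff_forall_of_isRegular hreg hdom).2 fun a ha => ?_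
  obtain ⟨S, hS⟩ := Option.ne_none_iff_exists'.1 ha
  rw [hS]
  exact h a S hS

end Inputs

section Recursion

theorem quasi_induction {P : QTerm var varsort index bindex opsym → Prop}
    {Q : QAbs var varsort index bindex opsym → Prop} (hVar : ∀ xs x, P (.qVar xs x))
    (hOp : ∀ d inp binp, liftP P inp → liftP Q binp → P (.qOp d inp binp))
    (hAbs : ∀ xs x X, P X → Q (.qAbs xs x X)) : (∀ X, P X) ∧ ∀ A, Q A := by
  have term_case (X) : P X :=
    QTerm.rec (motive_2 := Q) (motive_3 := fun o => ∀ X, o = some X → P X)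
      (motive_4 := fun o => ∀ A, o = some A → Q A) hVar hOp hAbs nofun
      (fun _ hX _ h => Option.some.inj h ▸ hX) nofun (fun _ hA _ h => Option.some.inj h ▸ hA) X
  exact ⟨term_case, fun ⟨xs, x, X⟩ => hAbs xs x X (term_case X)⟩

variable {D E : Type u} (v : varsort → var → D) (o : opsym → Input index D → Input bindex E → D)
  (b : varsort → var → D → E)

/-- Iteration over quasiterms: the homomorphism from quasiterms to the algebra `(D, E, v, o, b)`. -/
noncomputable def qFold : QTerm var varsort index bindex opsym → D :=
  QTerm.rec (motive_1 := fun _ => D) (motive_2 := fun _ => E) (motive_3 := fun _ => Option D)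
    (motive_4 := fun _ => Option E) v (fun d _ _ => o d) (fun xs x _ => b xs x)
    none (fun _ => some) none (fun _ => some)

/-- Iteration over quasiabstractions. -/
noncomputable def qFoldAbs : QAbs var varsort index bindex opsym → E
  | .qAbs xs x X => b xs x (qFold v o b X)

theorem qFold_qOp (d : opsym) (inp : Input index (QTerm var varsort index bindex opsym))
    (binp : Input bindex (QAbs var varsort index bindex opsym)) :
    qFold v o b (.qOp d inp binp) =
      o d (liftF (qFold v o b) inp) (liftF (qFoldAbs v o b) binp) := by
  refine congrArg₂ (o d) (funext fun i => ?_) (funext fun j => ?_)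
  · unfold liftF
    cases inp i <;> rfl
  · unfold liftF
    rcases binp j with _ | ⟨xs, x, X⟩ <;> rfl

end Recursion

variable {X X' : QTerm var varsort index bindex opsym}

section Constructors

variable {α α' β β' : Type u} {d : opsym} {inp : Input index α} {inp' : Input index α'}
  {binp : Input bindex β} {binp' : Input bindex β'}
  {f : α → QTerm var varsort index bindex opsym} {f' : α' → QTerm var varsort index bindex opsym}
  {g : β → QAbs var varsort index bindex opsym} {g' : β' → QAbs var varsort index bindex opsym}

theorem QFresh.qOp_liftF {ys : varsort} {y : var} (h : liftP (fun a => QFresh ys y (f a)) inp)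
    (h' : liftP (fun b => QFreshAbs ys y (g b)) binp) :
    QFresh ys y (.qOp d (liftF f inp) (liftF g binp)) :=
  .qOp (liftP_liftF.2 h) (liftP_liftF.2 h')

theorem QGood.qOp_liftF (h : liftP (fun a => QGood (f a)) inp)
    (h' : liftP (fun b => QGoodAbs (g b)) binp) (hs : smallDom var inp) (hs' : smallDom var binp) :
    QGood (.qOp d (liftF f inp) (liftF g binp)) :=
  .qOp (liftP_liftF.2 h) (liftP_liftF.2 h') (smallDom_liftF.2 hs) (smallDom_liftF.2 hs')

theorem Alpha.qOp_liftF (h : liftR (fun a a' => Alpha (f a) (f' a')) inp inp')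
    (h' : liftR (fun b b' => AlphaAbs (g b) (g' b')) binp binp') :
    Alpha (.qOp d (liftF f inp) (liftF g binp)) (.qOp d (liftF f' inp') (liftF g' binp')) :=
  have hl := liftR_liftF.2 h
  have hl' := liftR_liftF.2 h'
  .qOp hl.1 hl.2 hl'.1 hl'.2

end Constructors

section Permutation

/-- The action of a sort-indexed family of permutations on quasiterms, renaming all variables,
bound ones included. -/
noncomputable def qPerm (π : varsort → Equiv.Perm var) :
    QTerm var varsort index bindex opsym → QTerm var varsort index bindex opsym :=
  qFold (fun xs x => .qVar xs (π xs x)) .qOp (fun xs x => .qAbs xs (π xs x))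

/-- The action of a sort-indexed family of permutations on quasiabstractions. -/
noncomputable def qPermAbs (π : varsort → Equiv.Perm var) :
    QAbs var varsort index bindex opsym → QAbs var varsort index bindex opsym :=
  qFoldAbs (fun xs x => .qVar xs (π xs x)) .qOp (fun xs x => .qAbs xs (π xs x))

variable (π σ : varsort → Equiv.Perm var)

theorem qPerm_qVar (xs : varsort) (x : var) :
    qPerm π (.qVar xs x : QTerm var varsort index bindex opsym) = .qVar xs (π xs x) :=
  rfl

theorem qPerm_qOp (d : opsym) (inp : Input index (QTerm var varsort index bindex opsym))
    (binp : Input bindex (QAbs var varsort index bindex opsym)) :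
    qPerm π (.qOp d inp binp) = .qOp d (liftF (qPerm π) inp) (liftF (qPermAbs π) binp) :=
  qFold_qOp ..

theorem qPermAbs_qAbs (xs : varsort) (x : var) (X : QTerm var varsort index bindex opsym) :
    qPermAbs π (.qAbs xs x X) = .qAbs xs (π xs x) (qPerm π X) :=
  rfl

theorem qPerm_one_both : (∀ X : QTerm var varsort index bindex opsym, qPerm 1 X = X) ∧
    ∀ A : QAbs var varsort index bindex opsym, qPermAbs 1 A = A := by
  refine quasi_induction (fun xs x => rfl) (fun d inp binp ih ih' => ?_) (fun xs x X ih => ?_)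
  · have liftF_id' {α β : Type u} (i : Input α β) : liftF (fun b => b) i = i :=
      funext fun _ => Option.map_id_apply
    rw [qPerm_qOp, liftF_congr ih, liftF_congr ih', liftF_id', liftF_id']
  · rw [qPermAbs_qAbs, ih, Pi.one_apply, Equiv.Perm.one_apply]

theorem qPerm_qPerm_both :
    (∀ X : QTerm var varsort index bindex opsym, qPerm π (qPerm σ X) = qPerm (π * σ) X) ∧
    ∀ A : QAbs var varsort index bindex opsym, qPermAbs π (qPermAbs σ A) = qPermAbs (π * σ) A := by
  refine quasi_induction (fun xs x => rfl) (fun d inp binp ih ih' => ?_) (fun xs x X ih => ?_)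
  · simp only [qPerm_qOp, liftF_liftF, liftF_congr ih, liftF_congr ih']
  · simp only [qPermAbs_qAbs, ih, Pi.mul_apply, Equiv.Perm.mul_apply]

theorem qPerm_qPerm (X : QTerm var varsort index bindex opsym) :
    qPerm π (qPerm σ X) = qPerm (π * σ) X :=
  (qPerm_qPerm_both π σ).1 X

/-- The transposition of `z₁` and `z₂` at sort `zs`, as a family of permutations. -/
noncomputable def swapAt (zs : varsort) (z₁ z₂ : var) : varsort → Equiv.Perm var :=
  Pi.mulSingle zs (Equiv.swap z₁ z₂)

theorem swapAt_self (zs : varsort) (z₁ z₂ : var) :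
    swapAt zs z₁ z₂ zs = Equiv.swap z₁ z₂ :=
  Pi.mulSingle_eq_same ..

theorem swapAt_of_ne {zs xs : varsort} (h : xs ≠ zs) (z₁ z₂ : var) : swapAt zs z₁ z₂ xs = 1 :=
  Pi.mulSingle_eq_of_ne h _

theorem mul_swapAt (zs : varsort) (z₁ z₂ : var) :
    π * swapAt zs z₁ z₂ = swapAt zs (π zs z₁) (π zs z₂) * π := by
  funext xs
  by_cases h : xs = zs
  · subst h
    simp only [Pi.mul_apply, swapAt_self, Equiv.mul_swap_eq_swap_mul]
  · simp only [Pi.mul_apply, swapAt_of_ne h, one_mul, mul_one]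

theorem swapVarS_eq_swapAt (zs xs : varsort) (z₁ z₂ x : var) :
    swapVarS var varsort zs xs z₁ z₂ x = swapAt zs z₁ z₂ xs x := by
  unfold swapVarS
  split_ifs with h
  · rw [h, swapAt_self]
    rfl
  · rw [swapAt_of_ne h, Equiv.Perm.one_apply]

theorem qSwap_eq_qPerm (z₁ z₂ : var) (zs : varsort)
    (X : QTerm var varsort index bindex opsym) :
    qSwap z₁ z₂ zs X = qPerm (swapAt zs z₁ z₂) X := by
  simp only [qSwap, qPerm, qFold, swapVarS_eq_swapAt]

theorem qPerm_qSwap (z₁ z₂ : var) (zs : varsort) (X : QTerm var varsort index bindex opsym) :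
    qPerm π (qSwap z₁ z₂ zs X) = qSwap (π zs z₁) (π zs z₂) zs (qPerm π X) := by
  rw [qSwap_eq_qPerm, qSwap_eq_qPerm, qPerm_qPerm, qPerm_qPerm, mul_swapAt]

mutual

theorem QFresh.qPerm {ys : varsort} {y : var} : ∀ {X : QTerm var varsort index bindex opsym},
    QFresh ys y X → QFresh ys (π ys y) (qPerm π X)
  | _, .qVar hne => .qVar fun h => hne (by
      obtain ⟨rfl, h⟩ := Prod.mk.inj h
      rw [(π ys).injective h])
  | _, .qOp h h' => by
    rw [qPerm_qOp]
    exact .qOp_liftF (fun i X hX => (h i X hX).qPerm) (fun j A hA => (h' j A hA).qPermAbs)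

theorem QFreshAbs.qPermAbs {ys : varsort} {y : var} :
    ∀ {A : QAbs var varsort index bindex opsym},
      QFreshAbs ys y A → QFreshAbs ys (π ys y) (qPermAbs π A)
  | _, .qAbs_bound => .qAbs_bound
  | _, .qAbs_body h => .qAbs_body h.qPerm

end

mutual

theorem QGood.qPerm : ∀ {X : QTerm var varsort index bindex opsym},
    QGood X → QGood (qPerm π X)
  | _, .qVar => .qVar
  | _, .qOp h h' hs hs' => by
    rw [qPerm_qOp]
    exact .qOp_liftF (fun i X hX => (h i X hX).qPerm) (fun j A hA => (h' j A hA).qPermAbs) hs hs'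

theorem QGoodAbs.qPermAbs : ∀ {A : QAbs var varsort index bindex opsym},
    QGoodAbs A → QGoodAbs (qPermAbs π A)
  | _, .qAbs h => .qAbs h.qPerm

end

mutual

theorem Alpha.qPerm : ∀ {X X' : QTerm var varsort index bindex opsym},
    Alpha X X' → Alpha (qPerm π X) (qPerm π X')
  | _, _, .qVar => .qVar
  | _, _, .qOp hdom h hdom' h' => by
    rw [qPerm_qOp, qPerm_qOp]
    exact .qOp_liftF ⟨hdom, fun i X X' hX hX' => (h i X X' hX hX').qPerm⟩
      ⟨hdom', fun j A A' hA hA' => (h' j A A' hA hA').qPermAbs⟩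

theorem AlphaAbs.qPermAbs : ∀ {A A' : QAbs var varsort index bindex opsym},
    AlphaAbs A A' → AlphaAbs (qPermAbs π A) (qPermAbs π A')
  | _, _, .qAbs (xs := xs) (y := y) hy hX hX' h => by
    have hswap := h.qPerm
    rw [qPerm_qSwap, qPerm_qSwap] at hswap
    exact .qAbs (y := π xs y) (by simpa using hy) (hX.qPerm π) (hX'.qPerm π) hswap

end

end Permutation

section Variables

/-- The set of all sorted variables occurring in a quasiterm, free, bound or binding. -/
noncomputable def qVars : QTerm var varsort index bindex opsym → Set (varsort × var) :=
  qFold (fun xs x => {(xs, x)}) (fun _ inp binp => inputUnion inp ∪ inputUnion binp)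
    (fun xs x S => insert (xs, x) S)

/-- The set of all sorted variables occurring in a quasiabstraction. -/
noncomputable def qVarsAbs : QAbs var varsort index bindex opsym → Set (varsort × var) :=
  qFoldAbs (fun xs x => {(xs, x)}) (fun _ inp binp => inputUnion inp ∪ inputUnion binp)
    (fun xs x S => insert (xs, x) S)

/-- The set of sorted variables in binding position in a quasiterm. -/
noncomputable def qBinders : QTerm var varsort index bindex opsym → Set (varsort × var) :=
  qFold (fun _ _ => ∅) (fun _ inp binp => inputUnion inp ∪ inputUnion binp)
    (fun xs x S => insert (xs, x) S)

/-- The set of sorted variables in binding position in a quasiabstraction. -/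
noncomputable def qBindersAbs : QAbs var varsort index bindex opsym → Set (varsort × var) :=
  qFoldAbs (fun _ _ => ∅) (fun _ inp binp => inputUnion inp ∪ inputUnion binp)
    (fun xs x S => insert (xs, x) S)

section Equations

variable (d : opsym) (inp : Input index (QTerm var varsort index bindex opsym))
  (binp : Input bindex (QAbs var varsort index bindex opsym)) (xs : varsort) (x : var)

theorem qVars_qOp :
    qVars (.qOp d inp binp) = inputUnion (liftF qVars inp) ∪ inputUnion (liftF qVarsAbs binp) :=
  qFold_qOp ..

theorem qVarsAbs_qAbs (X : QTerm var varsort index bindex opsym) :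
    qVarsAbs (.qAbs xs x X) = insert (xs, x) (qVars X) :=
  rfl

theorem qBinders_qOp :
    qBinders (.qOp d inp binp) =
      inputUnion (liftF qBinders inp) ∪ inputUnion (liftF qBindersAbs binp) :=
  qFold_qOp ..

theorem qBindersAbs_qAbs (X : QTerm var varsort index bindex opsym) :
    qBindersAbs (.qAbs xs x X) = insert (xs, x) (qBinders X) :=
  rfl

end Equations

theorem forall_mem_qVars_qOp {P : varsort × var → Prop} {d : opsym}
    {inp : Input index (QTerm var varsort index bindex opsym)}
    {binp : Input bindex (QAbs var varsort index bindex opsym)} :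
    (∀ p ∈ qVars (.qOp d inp binp), P p) ↔
      liftP (fun X => ∀ p ∈ qVars X, P p) inp ∧ liftP (fun A => ∀ p ∈ qVarsAbs A, P p) binp := by
  simp only [qVars_qOp, Set.mem_union, or_imp, forall_and, forall_mem_inputUnion_liftF]

theorem forall_mem_qBinders_qOp {P : varsort × var → Prop} {d : opsym}
    {inp : Input index (QTerm var varsort index bindex opsym)}
    {binp : Input bindex (QAbs var varsort index bindex opsym)} :
    (∀ p ∈ qBinders (.qOp d inp binp), P p) ↔
      liftP (fun X => ∀ p ∈ qBinders X, P p) inp ∧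
        liftP (fun A => ∀ p ∈ qBindersAbs A, P p) binp := by
  simp only [qBinders_qOp, Set.mem_union, or_imp, forall_and, forall_mem_inputUnion_liftF]

theorem qFresh_of_forall_ne_both (ys : varsort) (y : var) :
    (∀ X : QTerm var varsort index bindex opsym, (∀ p ∈ qVars X, (ys, y) ≠ p) → QFresh ys y X) ∧
    ∀ A : QAbs var varsort index bindex opsym,
      (∀ p ∈ qVarsAbs A, (ys, y) ≠ p) → QFreshAbs ys y A := by
  refine quasi_induction (fun xs x h => .qVar (h _ rfl)) (fun d inp binp ih ih' h => ?_)
    fun xs x X ih h => ?_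
  · rw [forall_mem_qVars_qOp] at h
    exact .qOp (fun i X hX => ih i X hX (h.1 i X hX)) fun j A hA => ih' j A hA (h.2 j A hA)
  · rw [qVarsAbs_qAbs, Set.forall_mem_insert] at h
    exact .qAbs_body (ih h.2)

theorem qFresh_of_notMem_qVars {ys : varsort} {y : var} (h : (ys, y) ∉ qVars X) : QFresh ys y X :=
  (qFresh_of_forall_ne_both ys y).1 X fun _ hp => (ne_of_mem_of_not_mem hp h).symm

theorem qPerm_congr_both (π σ : varsort → Equiv.Perm var) :
    (∀ X : QTerm var varsort index bindex opsym,
      (∀ p ∈ qVars X, π p.1 p.2 = σ p.1 p.2) → qPerm π X = qPerm σ X) ∧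
    ∀ A : QAbs var varsort index bindex opsym,
      (∀ p ∈ qVarsAbs A, π p.1 p.2 = σ p.1 p.2) → qPermAbs π A = qPermAbs σ A := by
  refine quasi_induction (fun xs x h => ?_) (fun d inp binp ih ih' h => ?_) fun xs x X ih h => ?_
  · rw [qPerm_qVar, qPerm_qVar, h (xs, x) rfl]
  · rw [forall_mem_qVars_qOp] at h
    rw [qPerm_qOp, qPerm_qOp, liftF_congr fun i X hX => ih i X hX (h.1 i X hX),
      liftF_congr fun j A hA => ih' j A hA (h.2 j A hA)]
  · rw [qVarsAbs_qAbs, Set.forall_mem_insert] at h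
    rw [qPermAbs_qAbs, qPermAbs_qAbs, h.1, ih h.2]

theorem qSwap_qSwap_of_notMem_qVars {xs : varsort} {u v w : var} (hv : (xs, v) ∉ qVars X)
    (hw : (xs, w) ∉ qVars X) : qSwap w v xs (qSwap v u xs X) = qSwap w u xs X := by
  rw [qSwap_eq_qPerm, qSwap_eq_qPerm, qSwap_eq_qPerm, qPerm_qPerm]
  refine (qPerm_congr_both _ _).1 X fun ⟨zs, z⟩ hz => ?_
  by_cases hzs : zs = xs
  · subst hzs
    have hzv : z ≠ v := fun h => hv (h ▸ hz)
    have hzw : z ≠ w := fun h => hw (h ▸ hz)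
    simp only [Pi.mul_apply, swapAt_self, Equiv.Perm.mul_apply, Equiv.swap_apply_def]
    grind
  · simp only [Pi.mul_apply, swapAt_of_ne hzs, mul_one]

theorem mk_insert_lt {κ : Cardinal.{u}} (hκ : Cardinal.aleph0 ≤ κ) {α : Type u} {S : Set α}
    (a : α) (hS : Cardinal.mk S < κ) : Cardinal.mk (insert a S : Set α) < κ :=
  Cardinal.mk_insert_le.trans_lt
    (Cardinal.add_lt_of_lt hκ hS (Cardinal.one_lt_aleph0.trans_le hκ))

theorem mk_union_lt {κ : Cardinal.{u}} (hκ : Cardinal.aleph0 ≤ κ) {α : Type u} {S T : Set α}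
    (hS : Cardinal.mk S < κ) (hT : Cardinal.mk T < κ) : Cardinal.mk (S ∪ T : Set α) < κ :=
  (Cardinal.mk_union_le S T).trans_lt (Cardinal.add_lt_of_lt hκ hS hT)

mutual

theorem QGood.mk_qVars_lt (hreg : (Cardinal.mk var).IsRegular) :
    ∀ {X : QTerm var varsort index bindex opsym},
      QGood X → Cardinal.mk (qVars X) < Cardinal.mk var
  | .qVar xs x, .qVar => by
    have hsingleton : Cardinal.mk (qVars (.qVar xs x : QTerm var varsort index bindex opsym)) = 1 :=
      Cardinal.mk_singleton _
    exact hsingleton ▸ Cardinal.one_lt_aleph0.trans_le hreg.aleph0_le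
  | _, .qOp h h' hs hs' => by
    rw [qVars_qOp]
    exact mk_union_lt hreg.aleph0_le
      (mk_inputUnion_lt hreg (smallDom_liftF.2 hs)
        (liftP_liftF.2 fun i X hX => (h i X hX).mk_qVars_lt hreg))
      (mk_inputUnion_lt hreg (smallDom_liftF.2 hs')
        (liftP_liftF.2 fun j A hA => (h' j A hA).mk_qVarsAbs_lt hreg))

theorem QGoodAbs.mk_qVarsAbs_lt (hreg : (Cardinal.mk var).IsRegular) :
    ∀ {A : QAbs var varsort index bindex opsym},
      QGoodAbs A → Cardinal.mk (qVarsAbs A) < Cardinal.mk var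
  | _, .qAbs h => mk_insert_lt hreg.aleph0_le _ (h.mk_qVars_lt hreg)

end

theorem exists_var_notMem_of_mk_lt {S : Set (varsort × var)}
    (hS : Cardinal.mk S < Cardinal.mk var) (xs : varsort) : ∃ y, (xs, y) ∉ S := by
  by_contra! hall
  exact hS.not_ge <| Cardinal.mk_le_of_injective (f := fun y => (⟨(xs, y), hall y⟩ : S))
    fun a b h => by simpa using h

end Variables

section Renaming

theorem alphaAbs_of_alpha_qSwap (hreg : (Cardinal.mk var).IsRegular) {xs : varsort} {u v : var}
    (hX : QGood X) (hX' : QGood X') (hv : (xs, v) ∉ qVars X) (h : Alpha (qSwap v u xs X) X') :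
    AlphaAbs (.qAbs xs u X) (.qAbs xs v X') := by
  obtain ⟨w, hw⟩ := exists_var_notMem_of_mk_lt
    (mk_union_lt hreg.aleph0_le ((QGoodAbs.qAbs (xs := xs) (x := u) hX).mk_qVarsAbs_lt hreg)
      ((QGoodAbs.qAbs (xs := xs) (x := v) hX').mk_qVarsAbs_lt hreg)) xs
  simp only [qVarsAbs_qAbs, Set.mem_union, Set.mem_insert_iff, Prod.mk.injEq, true_and,
    not_or] at hw
  obtain ⟨⟨hwu, hwX⟩, hwv, hwX'⟩ := hw
  refine .qAbs (y := w) (by simp [hwu, hwv]) (qFresh_of_notMem_qVars hwX)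
    (qFresh_of_notMem_qVars hwX') ?_
  rw [← qSwap_qSwap_of_notMem_qVars hv hwX, qSwap_eq_qPerm w v, qSwap_eq_qPerm w v]
  exact h.qPerm _

-- Quantifying over all permutations makes the induction go through binders, where the body is
-- renamed before it is treated; this replaces an appeal to transitivity of alpha-equivalence.
theorem exists_alpha_qPerm_binders_notMem_both (hreg : (Cardinal.mk var).IsRegular)
    {S : Set (varsort × var)} (hS : Cardinal.mk S < Cardinal.mk var) :
    (∀ X : QTerm var varsort index bindex opsym, QGood X → ∀ π,
      ∃ X', QGood X' ∧ Alpha (qPerm π X) X' ∧ ∀ p ∈ qBinders X', p ∉ S) ∧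
    ∀ A : QAbs var varsort index bindex opsym, QGoodAbs A → ∀ π,
      ∃ A', QGoodAbs A' ∧ AlphaAbs (qPermAbs π A) A' ∧ ∀ p ∈ qBindersAbs A', p ∉ S := by
  refine quasi_induction (fun xs x _ π => ⟨_, .qVar, .qVar, nofun⟩)
    (fun d inp binp ih ih' hgood π => ?_) fun xs x X ih hgood π => ?_
  · cases hgood with | qOp h h' hs hs' =>
    obtain ⟨f, hf⟩ := liftP.exists_liftP_apply fun i X hX => ih i X hX (h i X hX) π
    obtain ⟨g, hg⟩ := liftP.exists_liftP_apply fun j A hA => ih' j A hA (h' j A hA) π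
    refine ⟨.qOp d (liftF f inp) (liftF g binp),
      .qOp_liftF (fun i X hX => (hf i X hX).1) (fun j A hA => (hg j A hA).1) hs hs', ?_, ?_⟩
    · rw [qPerm_qOp]
      exact .qOp_liftF (liftR_self.2 fun i X hX => (hf i X hX).2.1)
        (liftR_self.2 fun j A hA => (hg j A hA).2.1)
    · exact forall_mem_qBinders_qOp.2 ⟨liftP_liftF.2 fun i X hX => (hf i X hX).2.2,
        liftP_liftF.2 fun j A hA => (hg j A hA).2.2⟩
  · cases hgood with | qAbs hX =>
    have hπX := hX.qPerm π
    obtain ⟨v, hv⟩ := exists_var_notMem_of_mk_lt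
      (mk_union_lt hreg.aleph0_le hS (hπX.mk_qVars_lt hreg)) xs
    rw [Set.mem_union, not_or] at hv
    obtain ⟨X', hX', hα, hS'⟩ := ih hX (swapAt xs v (π xs x) * π)
    rw [← qPerm_qPerm, ← qSwap_eq_qPerm] at hα
    refine ⟨.qAbs xs v X', .qAbs hX', alphaAbs_of_alpha_qSwap hreg hπX hX' hv.2 hα, ?_⟩
    rw [qBindersAbs_qAbs, Set.forall_mem_insert]
    exact ⟨hv.1, hS'⟩

theorem QGood.exists_alpha_binders_notMem (hreg : (Cardinal.mk var).IsRegular) (hX : QGood X)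
    {S : Set (varsort × var)} (hS : Cardinal.mk S < Cardinal.mk var) :
    ∃ X', Alpha X X' ∧ ∀ p ∈ qBinders X', p ∉ S := by
  obtain ⟨X', -, hα, hS'⟩ := (exists_alpha_qPerm_binders_notMem_both hreg hS).1 X hX 1
  exact ⟨X', qPerm_one_both.1 X ▸ hα, hS'⟩

end Renaming

section Substitution

/-- Substitution on quasiterms that does not guard against variable capture. -/
noncomputable def qNaiveSubst (Y : QTerm var varsort index bindex opsym) (y : var)
    (ys : varsort) : QTerm var varsort index bindex opsym → QTerm var varsort index bindex opsym :=
  qFold (fun xs x => if (xs, x) = (ys, y) then Y else .qVar xs x) .qOp .qAbs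

/-- Substitution on quasiabstractions that does not guard against variable capture. -/
noncomputable def qNaiveSubstAbs (Y : QTerm var varsort index bindex opsym) (y : var)
    (ys : varsort) : QAbs var varsort index bindex opsym → QAbs var varsort index bindex opsym :=
  qFoldAbs (fun xs x => if (xs, x) = (ys, y) then Y else .qVar xs x) .qOp .qAbs

theorem qSubst_qNaiveSubst_both (Y : QTerm var varsort index bindex opsym) (y : var)
    (ys : varsort) :
    (∀ X : QTerm var varsort index bindex opsym,
      (∀ p ∈ qBinders X, p ∉ insert (ys, y) (qVars Y)) →
        QSubst X Y y ys (qNaiveSubst Y y ys X)) ∧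
    ∀ A : QAbs var varsort index bindex opsym,
      (∀ p ∈ qBindersAbs A, p ∉ insert (ys, y) (qVars Y)) →
        QSubstAbs A Y y ys (qNaiveSubstAbs Y y ys A) := by
  refine quasi_induction (fun xs x _ => ?_) (fun d inp binp ih ih' h => ?_) fun xs x X ih h => ?_
  · change QSubst _ Y y ys (if (xs, x) = (ys, y) then Y else .qVar xs x)
    split_ifs with hx
    · obtain ⟨rfl, rfl⟩ := Prod.mk.inj hx
      exact .var_eq
    · exact .var_ne hx
  · rw [forall_mem_qBinders_qOp] at h
    have hinp : liftR (fun X X' => QSubst X Y y ys X') inp (liftF (qNaiveSubst Y y ys) inp) :=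
      liftR_liftF_right.2 fun i X hX => ih i X hX (h.1 i X hX)
    have hbinp : liftR (fun A A' => QSubstAbs A Y y ys A') binp
        (liftF (qNaiveSubstAbs Y y ys) binp) :=
      liftR_liftF_right.2 fun j A hA => ih' j A hA (h.2 j A hA)
    rw [qNaiveSubst, qFold_qOp]
    exact .op hinp.1 hinp.2 hbinp.1 hbinp.2
  · rw [qBindersAbs_qAbs, Set.forall_mem_insert, Set.mem_insert_iff, not_or] at h
    exact .abs h.1.1 (qFresh_of_notMem_qVars h.1.2) (ih h.2)

theorem tmk_trep (X : Term var varsort index bindex opsym) : tmk (trep X) = X :=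
  Quot.out_eq X

theorem amk_arep (A : Abstr var varsort index bindex opsym) : amk (arep A) = A :=
  Quot.out_eq A

theorem exists_substRel (hreg : (Cardinal.mk var).IsRegular)
    {X Y : Term var varsort index bindex opsym} (hX : good X) (hY : good Y) (y : var)
    (ys : varsort) : ∃ Z, SubstRel X Y y ys Z := by
  obtain ⟨X', hα, hbinders⟩ := hX.exists_alpha_binders_notMem hreg
    (mk_insert_lt hreg.aleph0_le (ys, y) (hY.mk_qVars_lt hreg))
  have hX' : tmk X' = X := (Quot.sound hα).symm.trans (tmk_trep X)
  exact ⟨_, X', _, hX', rfl, (qSubst_qNaiveSubst_both (trep Y) y ys).1 X' hbinders⟩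

theorem substRel_subst (hreg : (Cardinal.mk var).IsRegular)
    {X Y : Term var varsort index bindex opsym} (hX : good X) (hY : good Y) (y : var)
    (ys : varsort) : SubstRel X Y y ys (subst X Y y ys) := by
  have hex := exists_substRel hreg hX hY y ys
  rw [subst, dif_pos hex]
  exact hex.choose_spec

end Substitution

section Valuations

variable {Dt : Type u} (ρ : varsort → var → Dt)

theorem updVal_self (xs : varsort) (x : var) (d : Dt) : updVal ρ xs x d xs x = d :=
  if_pos rfl

theorem updVal_of_ne {xs ys : varsort} {x y : var} (h : (ys, y) ≠ (xs, x)) (d : Dt) :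
    updVal ρ xs x d ys y = ρ ys y :=
  if_neg h

theorem updVal_congr {ρ ρ' : varsort → var → Dt} {xs : varsort} {x : var}
    (h : ∀ ys y, (ys, y) ≠ (xs, x) → ρ ys y = ρ' ys y) (d : Dt) :
    updVal ρ xs x d = updVal ρ' xs x d :=
  funext₂ fun ys y => ite_congr rfl (fun _ => rfl) (h ys y)

theorem updVal_comm {xs ys : varsort} {x y : var} (h : (xs, x) ≠ (ys, y)) (d e : Dt) :
    updVal (updVal ρ xs x d) ys y e = updVal (updVal ρ ys y e) xs x d := by
  funext zs z
  simp only [updVal]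
  grind

theorem updVal_perm (π : varsort → Equiv.Perm var) (xs : varsort) (x : var) (d : Dt) :
    (fun zs z => updVal ρ xs (π xs x) d zs (π zs z)) =
      updVal (fun zs z => ρ zs (π zs z)) xs x d := by
  funext zs z
  have hpair : (zs, π zs z) = (xs, π xs x) ↔ (zs, z) = (xs, x) := by
    simp only [Prod.mk.injEq]
    refine and_congr_right fun h => ?_
    rw [h, EmbeddingLike.apply_eq_iff_eq]
  simp only [updVal, hpair]

end Valuations

section Interpretation

variable {Dt Da : Type u} (opI : opsym → Input index Dt → Input bindex Da → Dt)
  (absI : varsort → (Dt → Dt) → Da)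

/-- The interpretation of quasiterms in the semantic domain `(Dt, Da, opI, absI)`. -/
noncomputable def qSem : QTerm var varsort index bindex opsym → (varsort → var → Dt) → Dt :=
  qFold (fun xs x ρ => ρ xs x) (fun d inp binp ρ => opI d (liftF (· ρ) inp) (liftF (· ρ) binp))
    (fun xs x s ρ => absI xs fun d => s (updVal ρ xs x d))

/-- The interpretation of quasiabstractions in the semantic domain `(Dt, Da, opI, absI)`. -/
noncomputable def qSemAbs : QAbs var varsort index bindex opsym → (varsort → var → Dt) → Da :=
  qFoldAbs (fun xs x ρ => ρ xs x)
    (fun d inp binp ρ => opI d (liftF (· ρ) inp) (liftF (· ρ) binp))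
    (fun xs x s ρ => absI xs fun d => s (updVal ρ xs x d))

theorem qSem_qOp (d : opsym) (inp : Input index (QTerm var varsort index bindex opsym))
    (binp : Input bindex (QAbs var varsort index bindex opsym)) (ρ : varsort → var → Dt) :
    qSem opI absI (.qOp d inp binp) ρ =
      opI d (liftF (fun X => qSem opI absI X ρ) inp)
        (liftF (fun A => qSemAbs opI absI A ρ) binp) := by
  rw [qSem, qFold_qOp, liftF_liftF, liftF_liftF]
  rfl

theorem qSemAbs_qAbs (xs : varsort) (x : var) (X : QTerm var varsort index bindex opsym)
    (ρ : varsort → var → Dt) :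
    qSemAbs opI absI (.qAbs xs x X) ρ = absI xs fun d => qSem opI absI X (updVal ρ xs x d) :=
  rfl

theorem qSem_qPerm_both (π : varsort → Equiv.Perm var) :
    (∀ (X : QTerm var varsort index bindex opsym) (ρ : varsort → var → Dt),
      qSem opI absI (qPerm π X) ρ = qSem opI absI X fun xs x => ρ xs (π xs x)) ∧
    ∀ (A : QAbs var varsort index bindex opsym) (ρ : varsort → var → Dt),
      qSemAbs opI absI (qPermAbs π A) ρ = qSemAbs opI absI A fun xs x => ρ xs (π xs x) := by
  refine quasi_induction (fun xs x ρ => rfl) (fun d inp binp ih ih' ρ => ?_)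
    fun xs x X ih ρ => ?_
  · rw [qPerm_qOp, qSem_qOp, qSem_qOp, liftF_liftF, liftF_liftF,
      liftF_congr fun i X hX => ih i X hX ρ, liftF_congr fun j A hA => ih' j A hA ρ]
  · simp only [qPermAbs_qAbs, qSemAbs_qAbs, ih, updVal_perm]

mutual

theorem QFresh.qSem_congr {ys : varsort} {y : var} :
    ∀ {X : QTerm var varsort index bindex opsym} {ρ ρ' : varsort → var → Dt}, QFresh ys y X →
      (∀ zs z, (zs, z) ≠ (ys, y) → ρ zs z = ρ' zs z) → qSem opI absI X ρ = qSem opI absI X ρ'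
  | _, _, _, .qVar hne, hρ => hρ _ _ hne.symm
  | _, _, _, .qOp h h', hρ => by
    rw [qSem_qOp, qSem_qOp, liftF_congr fun i X hX => (h i X hX).qSem_congr hρ,
      liftF_congr fun j A hA => (h' j A hA).qSemAbs_congr hρ]

theorem QFreshAbs.qSemAbs_congr {ys : varsort} {y : var} :
    ∀ {A : QAbs var varsort index bindex opsym} {ρ ρ' : varsort → var → Dt}, QFreshAbs ys y A →
      (∀ zs z, (zs, z) ≠ (ys, y) → ρ zs z = ρ' zs z) →
        qSemAbs opI absI A ρ = qSemAbs opI absI A ρ'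
  | _, ρ, ρ', .qAbs_bound, hρ => by
    have hupd (d : Dt) : updVal ρ ys y d = updVal ρ' ys y d :=
      updVal_congr hρ d
    simp only [qSemAbs_qAbs, hupd]
  | .qAbs xs x _, ρ, ρ', .qAbs_body h, hρ => by
    refine congrArg (absI xs) (funext fun d => h.qSem_congr fun zs z hz => ?_)
    simp only [updVal, hρ zs z hz]

end

theorem QFresh.qSem_qSwap_updVal {xs : varsort} {y : var} (hX : QFresh xs y X) (x : var)
    (ρ : varsort → var → Dt) (d : Dt) :
    qSem opI absI (qSwap y x xs X) (updVal ρ xs y d) = qSem opI absI X (updVal ρ xs x d) := by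
  rw [qSwap_eq_qPerm, (qSem_qPerm_both opI absI _).1]
  refine hX.qSem_congr opI absI fun zs z hz => ?_
  by_cases hzs : zs = xs
  · subst hzs
    have hzy : z ≠ y := fun h => hz (h ▸ rfl)
    simp only [swapAt_self, updVal, Equiv.swap_apply_def, Prod.mk.injEq, true_and]
    grind
  · have hne (w w' : var) : (zs, w) ≠ (xs, w') := fun h => hzs (congrArg Prod.fst h)
    rw [swapAt_of_ne hzs, updVal_of_ne ρ (hne _ _), updVal_of_ne ρ (hne _ _),
      Equiv.Perm.one_apply]

mutual

theorem Alpha.qSem_eq : ∀ {X X' : QTerm var varsort index bindex opsym},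
    Alpha X X' → qSem opI absI X = qSem opI absI X'
  | _, _, .qVar => rfl
  | _, _, .qOp hdom h hdom' h' => by
    funext ρ
    rw [qSem_qOp, qSem_qOp,
      liftF_eq_liftF ⟨hdom, fun i X X' hX hX' => congrFun (h i X X' hX hX').qSem_eq ρ⟩,
      liftF_eq_liftF ⟨hdom', fun j A A' hA hA' => congrFun (h' j A A' hA hA').qSemAbs_eq ρ⟩]

theorem AlphaAbs.qSemAbs_eq : ∀ {A A' : QAbs var varsort index bindex opsym},
    AlphaAbs A A' → qSemAbs opI absI A = qSemAbs opI absI A'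
  | _, _, .qAbs _ hX hX' h => by
    funext ρ
    simp only [qSemAbs_qAbs, ← hX.qSem_qSwap_updVal, ← hX'.qSem_qSwap_updVal, h.qSem_eq]

end

mutual

theorem QSubst.qSem_eq {Y : QTerm var varsort index bindex opsym} {y : var} {ys : varsort} :
    ∀ {X Z : QTerm var varsort index bindex opsym}, QSubst X Y y ys Z →
      ∀ ρ : varsort → var → Dt,
        qSem opI absI Z ρ = qSem opI absI X (updVal ρ ys y (qSem opI absI Y ρ))
  | _, _, .var_eq, ρ => (updVal_self ρ ys y _).symm
  | _, _, .var_ne hne, ρ => (updVal_of_ne ρ hne _).symm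
  | _, _, .op hdom h hdom' h', ρ => by
    rw [qSem_qOp, qSem_qOp,
      liftF_eq_liftF ⟨hdom, fun i X X' hX hX' => ((h i X X' hX hX').qSem_eq ρ).symm⟩,
      liftF_eq_liftF ⟨hdom', fun j A A' hA hA' => ((h' j A A' hA hA').qSemAbs_eq ρ).symm⟩]

theorem QSubstAbs.qSemAbs_eq {Y : QTerm var varsort index bindex opsym} {y : var}
    {ys : varsort} :
    ∀ {A B : QAbs var varsort index bindex opsym}, QSubstAbs A Y y ys B →
      ∀ ρ : varsort → var → Dt,
        qSemAbs opI absI B ρ = qSemAbs opI absI A (updVal ρ ys y (qSem opI absI Y ρ))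
  | _, _, .abs (xs := xs) (x := x) hne hY h, ρ => by
    have hYρ (d : Dt) : qSem opI absI Y (updVal ρ xs x d) = qSem opI absI Y ρ :=
      hY.qSem_congr opI absI fun zs z hz => updVal_of_ne ρ hz d
    simp only [qSemAbs_qAbs, h.qSem_eq, hYρ, updVal_comm ρ hne]

end

/-- The interpretation of terms, lifted from quasiterms. -/
noncomputable def sem : Term var varsort index bindex opsym → (varsort → var → Dt) → Dt :=
  Quot.lift (qSem opI absI) fun _ _ h => h.qSem_eq opI absI

/-- The interpretation of abstractions, lifted from quasiabstractions. -/
noncomputable def semAbs : Abstr var varsort index bindex opsym → (varsort → var → Dt) → Da :=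
  Quot.lift (qSemAbs opI absI) fun _ _ h => h.qSemAbs_eq opI absI

theorem qSem_trep (X : Term var varsort index bindex opsym) :
    qSem opI absI (trep X) = sem opI absI X :=
  congrArg (sem opI absI) (tmk_trep X)

theorem qSemAbs_arep (A : Abstr var varsort index bindex opsym) :
    qSemAbs opI absI (arep A) = semAbs opI absI A :=
  congrArg (semAbs opI absI) (amk_arep A)

variable (ρ : varsort → var → Dt)

theorem sem_op (d : opsym) (inp : Input index (Term var varsort index bindex opsym))
    (binp : Input bindex (Abstr var varsort index bindex opsym)) :
    sem opI absI (Op d inp binp) ρ =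
      opI d (liftF (fun X => sem opI absI X ρ) inp)
        (liftF (fun A => semAbs opI absI A ρ) binp) := by
  change qSem opI absI (.qOp d (liftF trep inp) (liftF arep binp)) ρ = _
  simp only [qSem_qOp, liftF_liftF, qSem_trep, qSemAbs_arep]

theorem semAbs_abs (xs : varsort) (x : var) (X : Term var varsort index bindex opsym) :
    semAbs opI absI (Abs xs x X) ρ = absI xs fun d => sem opI absI X (updVal ρ xs x d) := by
  change qSemAbs opI absI (.qAbs xs x (trep X)) ρ = _
  rw [qSemAbs_qAbs, qSem_trep]

theorem sem_of_substRel {X Y Z : Term var varsort index bindex opsym} {y : var} {ys : varsort}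
    (h : SubstRel X Y y ys Z) :
    sem opI absI Z ρ = sem opI absI X (updVal ρ ys y (sem opI absI Y ρ)) := by
  obtain ⟨X', Z', rfl, rfl, h⟩ := h
  rw [← qSem_trep opI absI Y]
  exact h.qSem_eq opI absI ρ

theorem sem_congr_of_fresh {xs : varsort} {x : var} {X : Term var varsort index bindex opsym}
    (hX : fresh xs x X) {ρ ρ' : varsort → var → Dt}
    (hρ : ∀ ys y, (ys, y) ≠ (xs, x) → ρ ys y = ρ' ys y) :
    sem opI absI X ρ = sem opI absI X ρ' := by
  rw [← qSem_trep]
  exact QFresh.qSem_congr opI absI hX hρ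

end Interpretation

theorem semantic_interpretation_general (hreg : (Cardinal.mk var).IsRegular)
    {Dt Da : Type u}
    (opI : opsym → Input index Dt → Input bindex Da → Dt)
    (absI : varsort → (Dt → Dt) → Da) :
    ∃ (sem : Term var varsort index bindex opsym → (varsort → var → Dt) → Dt)
      (semAbs : Abstr var varsort index bindex opsym → (varsort → var → Dt) → Da),
      (∀ xs x ρ, sem (Var xs x) ρ = ρ xs x) ∧
      (∀ d inp binp ρ, sem (Op d inp binp) ρ =
        opI d (liftF (fun X => sem X ρ) inp) (liftF (fun A => semAbs A ρ) binp)) ∧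
      (∀ xs x X ρ, semAbs (Abs xs x X) ρ = absI xs (fun d => sem X (updVal ρ xs x d))) ∧
      (∀ X Y y ys ρ, good X → good Y →
        sem (subst X Y y ys) ρ = sem X (updVal ρ ys y (sem Y ρ))) ∧
      (∀ xs x X, fresh xs x X →
        ∀ ρ ρ', (∀ ys yv, (ys, yv) ≠ (xs, x) → ρ ys yv = ρ' ys yv) →
          sem X ρ = sem X ρ') :=
  ⟨sem opI absI, semAbs opI absI, fun _ _ _ => rfl,
    fun d inp binp ρ => sem_op opI absI ρ d inp binp,
    fun xs x X ρ => semAbs_abs opI absI ρ xs x X,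
    fun _ _ y ys ρ hX hY => sem_of_substRel opI absI ρ (substRel_subst hreg hX hY y ys),
    fun _ _ _ hX _ _ hρ => sem_congr_of_fresh opI absI hX hρ⟩

/-- terms and abstractions are interpretable in any semantic domain
`(Dt, Da, opI, absI)`, compatibly with the constructors; moreover the
interpretation maps substitution to valuation update and interpretation of fresh
variables does not matter. -/
theorem semantic_interpretation (hinf : Cardinal.aleph0 ≤ Cardinal.mk var)
    (hreg : (Cardinal.mk var).IsRegular)
    {Dt Da : Type u}
    (opI : opsym → Input index Dt → Input bindex Da → Dt)
    (absI : varsort → (Dt → Dt) → Da) :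
    ∃ (sem : Term var varsort index bindex opsym → (varsort → var → Dt) → Dt)
      (semAbs : Abstr var varsort index bindex opsym → (varsort → var → Dt) → Da),
      (∀ xs x ρ, sem (Var xs x) ρ = ρ xs x) ∧
      (∀ d inp binp ρ, liftP good inp → liftP goodAbs binp →
        smallDom var inp → smallDom var binp →
        sem (Op d inp binp) ρ =
          opI d (liftF (fun X => sem X ρ) inp) (liftF (fun A => semAbs A ρ) binp)) ∧
      (∀ xs x X ρ, good X →
        semAbs (Abs xs x X) ρ = absI xs (fun d => sem X (updVal ρ xs x d))) ∧
      (∀ X Y y ys ρ, good X → good Y →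
        sem (subst X Y y ys) ρ = sem X (updVal ρ ys y (sem Y ρ))) ∧
      (∀ xs x X, good X → fresh xs x X →
        ∀ ρ ρ', (∀ ys yv, (ys, yv) ≠ (xs, x) → ρ ys yv = ρ' ys yv) →
          sem X ρ = sem X ρ') := by
  obtain ⟨sem, semAbs, hVar, hOp, hAbs, hSubst, hFresh⟩ :=
    semantic_interpretation_general hreg opI absI
  exact ⟨sem, semAbs, hVar, fun d inp binp ρ _ _ _ _ => hOp d inp binp ρ,
    fun xs x X ρ _ => hAbs xs x X ρ, hSubst, fun xs x X _ => hFresh xs x X⟩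

end Binding
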